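/- Let v₁, v₂, v₃, u₁, u₂, u₃ be bit-vectors of width 2. Then the 12-bit zero-extended product of (v₃ ++ v₂ ++ v₁) and (u₃ ++ u₂ ++ u₁) equals ((v₃*u₃) ++ (v₃*u₁) ++ (v₁*u₁)) + (0² ++ (v₂*u₃) ++ (v₂*u₁) ++ 0²) + (0² ++ (v₃*u₂) ++ (v₁*u₂) ++ 0²) + (0⁴ ++ (v₂*u₂) ++ 0⁴) + (0⁴ ++ (v₁*u₃) ++ 0⁴), where each vᵢ*uⱼ denotes the exact 4-bit product of the zero-extensions of vᵢ and uⱼ, and all summands are 12-bit vectors. -/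

import Mathlib

/-- The exact 4-bit partial product of two 2-bit blocks. -/
def pp2 (a b : BitVec 2) : BitVec 4 := ((0#2) ++ a) * ((0#2) ++ b)

theorem app_toNat {m n : ℕ} (x : BitVec m) (y : BitVec n) :
    (x ++ y).toNat = x.toNat * 2 ^ n + y.toNat := by
  rw [BitVec.toNat_append, Nat.shiftLeft_eq, mul_comm, ← Nat.two_pow_add_eq_or_of_lt y.isLt]

theorem pp2_toNat : ∀ a b : BitVec 2, (pp2 a b).toNat = a.toNat * b.toNat := by
  decide

/-- Example 1 of the paper: a concrete combination of concatenations and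
additions realizing long multiplication of 6-bit operands in 2-bit blocks. -/
theorem long_mult_example1 (v₁ v₂ v₃ u₁ u₂ u₃ : BitVec 2) :
    BitVec.zeroExtend 12 (v₃ ++ v₂ ++ v₁) * BitVec.zeroExtend 12 (u₃ ++ u₂ ++ u₁) =
      BitVec.zeroExtend 12 (pp2 v₃ u₃ ++ pp2 v₃ u₁ ++ pp2 v₁ u₁)
      + BitVec.zeroExtend 12 ((0#2) ++ pp2 v₂ u₃ ++ pp2 v₂ u₁ ++ (0#2))
      + BitVec.zeroExtend 12 ((0#2) ++ pp2 v₃ u₂ ++ pp2 v₁ u₂ ++ (0#2))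
      + BitVec.zeroExtend 12 ((0#4) ++ pp2 v₂ u₂ ++ (0#4))
      + BitVec.zeroExtend 12 ((0#4) ++ pp2 v₁ u₃ ++ (0#4)) := by
  apply BitVec.eq_of_toNat_eq
  simp only [BitVec.truncate_eq_setWidth, BitVec.toNat_mul, BitVec.toNat_add,
    BitVec.toNat_setWidth, app_toNat, pp2_toNat, BitVec.toNat_ofNat, Nat.add_mod_mod,
    Nat.mod_add_mod, Nat.mul_mod_mod, Nat.mod_mul_mod]
  congr 1
  norm_num
  ring
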